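/- arXiv:2111.11494 — 2 statements merged into one kernel-verified Lean document; each statement's English description precedes it below -/
import Mathlib

section
/- Let m, n be positive integers, let h be a holomorphic function on the disc D(0,R) ⊂ ℂ, and let D denote the operator (Df)(z) = z^{−m} f''(z). Define H_j(X^{m+2}) = (1/A_j^n) D^j[h(X^{m+2})] and M(X,Y) = Σ_{j≥0} H_j(X^{m+2}) Y^{j(n+2)}. Then with C = min{((m+1)/(4(m+2)))^{1/(m+2)}, ((n+2)(n+1)/(4(m+2)²))^{1/(n+2)}}, the series defining M converges and M is holomorphic on the polydisc |X| < C·R^{1/(m+2)}, |Y| < C·R^{1/(n+2)}. In particular, if h is an entire function on ℂ, then M is an entire function on ℂ². -/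
open scoped BigOperators

noncomputable section

/-- `A_β^α = ∏_{k=1}^β [k(α+2)−1][k(α+2)]`, with `A_0^α = 1`. -/
def Acoef (α β : ℕ) : ℕ := ∏ k ∈ Finset.Icc 1 β, ((k * (α + 2) - 1) * (k * (α + 2)))

/-- The operator `D f (z) = f''(z) / z^m`. -/
def Dop (m : ℕ) (f : ℂ → ℂ) : ℂ → ℂ := fun z => deriv (deriv f) z / z ^ m

/-- The constant `C(m,n)` of the lemma. -/
def Cbound (m n : ℕ) : ℝ :=
  min (((m + 1 : ℝ) / (4 * (m + 2))) ^ ((1 : ℝ) / (m + 2)))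
    ((((n + 2 : ℝ) * (n + 1)) / (4 * (m + 2) ^ 2)) ^ ((1 : ℝ) / (n + 2)))

/-!
Write `h(z) = ∑ aₖ zᵏ`. Since `D X^{k(m+2)} = k(m+2)(k(m+2)-1) X^{(k-1)(m+2)}`, the product defining
`A_β^m` telescopes under iteration:
`D^j[h(X^{m+2})] = ∑ₖ a_{j+k} (A_{j+k}^m / A_k^m) X^{k(m+2)}`,
so that `M` is the double power series with coefficients `a_{j+k} A_{j+k}^m / (A_j^n A_k^m)`.
Now `((α+2)(α+1))^β β!² ≤ A_β^α ≤ (α+2)^{2β} β!²` and `(j+k)! ≤ 2^{j+k} j! k!` bound the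
`(j,k)` term by `|a_{j+k}| r^{j+k}` as soon as `|X|^{m+2} ≤ (m+1)/(4(m+2)) r` and
`|Y|^{n+2} ≤ (n+2)(n+1)/(4(m+2)²) r`, which is summable for `r < R`.
A dominated series of holomorphic functions is holomorphic.
-/

open Filter Metric Topology

theorem norm_fderiv_le_of_norm_le_on_ball {E F : Type*}
    [NormedAddCommGroup E] [NormedSpace ℂ E] [NormedAddCommGroup F] [NormedSpace ℂ F]
    {f : E → F} {x : E} {r B : ℝ} (hr : 0 < r) (hf : DifferentiableOn ℂ f (ball x r))
    (hB : ∀ y ∈ ball x r, ‖f y‖ ≤ B) : ‖fderiv ℂ f x‖ ≤ 2 * B / r := by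
  refine Complex.norm_fderiv_le_div_of_mapsTo_ball hf (fun y hy => ?_) hr
  rw [mem_closedBall, dist_eq_norm, two_mul]
  exact (norm_sub_le _ _).trans (add_le_add (hB y hy) (hB x (mem_ball_self hr)))

theorem differentiableAt_tsum_of_norm_le {ι E F : Type*}
    [NormedAddCommGroup E] [NormedSpace ℂ E] [NormedAddCommGroup F] [NormedSpace ℂ F]
    [CompleteSpace F] {f : ι → E → F} {u : ι → ℝ} {U : Set E} {x : E} (hu : Summable u)
    (hU : U ∈ 𝓝 x) (hf : ∀ i, DifferentiableOn ℂ (f i) U) (hfu : ∀ i, ∀ y ∈ U, ‖f i y‖ ≤ u i) :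
    DifferentiableAt ℂ (fun y => ∑' i, f i y) x := by
  obtain ⟨r, hr, hrU⟩ := nhds_basis_ball.mem_iff.mp hU
  have hr2 : 0 < r / 2 := half_pos hr
  have hball : ∀ y ∈ ball x (r / 2), ball y (r / 2) ⊆ U := fun y hy =>
    (ball_subset_ball' (by rw [mem_ball] at hy; linarith)).trans hrU
  have hderiv : ∀ i, ∀ y ∈ ball x (r / 2), HasFDerivAt (f i) (fderiv ℂ (f i) y) y :=
    fun i y hy => ((hf i).differentiableAt
      (mem_of_superset (ball_mem_nhds y hr2) (hball y hy))).hasFDerivAt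
  have hbound : ∀ i, ∀ y ∈ ball x (r / 2), ‖fderiv ℂ (f i) y‖ ≤ 2 * u i / (r / 2) :=
    fun i y hy => norm_fderiv_le_of_norm_le_on_ball hr2 ((hf i).mono (hball y hy))
      fun z hz => hfu i z (hball y hy hz)
  have hx : x ∈ ball x (r / 2) := mem_ball_self hr2
  exact (hasFDerivAt_tsum_of_isPreconnected ((hu.mul_left 2).div_const _) isOpen_ball
    (convex_ball x (r / 2)).isPreconnected hderiv hbound hx
    (hu.of_norm_bounded fun i => hfu i x (mem_of_mem_nhds hU)) hx).differentiableAt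

theorem frequently_norm_lt {E : Type*} [NormedAddCommGroup E] [NormedSpace ℝ E] [Nontrivial E]
    (x : E) : ∃ᶠ y in 𝓝 x, ‖x‖ < ‖y‖ := by
  intro hle
  have hx : x ∈ interior (closedBall (0 : E) ‖x‖) := by
    rw [mem_interior_iff_mem_nhds]
    filter_upwards [hle] with y hy
    simpa using hy
  simp [interior_closedBall'] at hx

/-- Every neighbourhood of `z` contains points of modulus larger than `‖z‖`, so that convergence
near `z` already gives absolute convergence on a disc centred at `0` and containing `z`. -/
theorem hasSum_deriv_of_eventually_hasSum_mul_pow {ι : Type*} {b : ι → ℂ} {e : ι → ℕ}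
    {f : ℂ → ℂ} {z : ℂ} (hf : ∀ᶠ w in 𝓝 z, HasSum (fun i => b i * w ^ e i) (f w)) :
    HasSum (fun i => b i * e i * z ^ (e i - 1)) (deriv f z) := by
  obtain ⟨w, hzw, hw⟩ := ((frequently_norm_lt z).and_eventually hf).exists
  have hterm : ∀ i, ∀ y ∈ ball (0 : ℂ) ‖w‖, ‖b i * y ^ e i‖ ≤ ‖b i * w ^ e i‖ := by
    intro i y hy
    rw [mem_ball_zero_iff] at hy
    simp only [norm_mul, norm_pow]
    gcongr
  have hsum := Complex.hasSum_deriv_of_summable_norm hw.summable.norm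
    (fun i => by fun_prop) isOpen_ball hterm (mem_ball_zero_iff.mpr hzw)
  have htsum : (fun y => ∑' i, b i * y ^ e i) =ᶠ[𝓝 z] f := hf.mono fun y hy => hy.tsum_eq
  rw [htsum.deriv_eq] at hsum
  exact hsum.congr_fun fun i => by simp [mul_assoc]

theorem summable_norm_mul_pow_add {E : Type*} [SeminormedAddCommGroup E] {a : ℕ → E} {r ρ B : ℝ}
    (hr : 0 ≤ r) (hrρ : r < ρ) (hB : ∀ k, ‖a k‖ * ρ ^ k ≤ B) :
    Summable fun i : ℕ × ℕ => ‖a (i.1 + i.2)‖ * r ^ (i.1 + i.2) := by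
  have hρ : 0 < ρ := hr.trans_lt hrρ
  have hgeom : Summable fun k : ℕ => (r / ρ) ^ k :=
    summable_geometric_of_lt_one (by positivity) ((div_lt_one hρ).mpr hrρ)
  have hprod := hgeom.mul_of_nonneg hgeom (fun _ => by positivity) fun _ => by positivity
  refine Summable.of_nonneg_of_le (fun _ => by positivity) (fun i => ?_) (hprod.mul_left B)
  calc ‖a (i.1 + i.2)‖ * r ^ (i.1 + i.2)
      = ‖a (i.1 + i.2)‖ * ρ ^ (i.1 + i.2) * ((r / ρ) ^ i.1 * (r / ρ) ^ i.2) := by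
        rw [← pow_add, mul_assoc, ← mul_pow, mul_div_cancel₀ _ hρ.ne']
    _ ≤ B * ((r / ρ) ^ i.1 * (r / ρ) ^ i.2) := by gcongr; exact hB _

theorem summable_norm_mul_pow_add_of_hasSum {a : ℕ → ℂ} {h : ℂ → ℂ} {r R : ℝ} (hr : 0 ≤ r)
    (hrR : r < R) (ha : ∀ z ∈ ball (0 : ℂ) R, HasSum (fun k => a k * z ^ k) (h z)) :
    Summable fun i : ℕ × ℕ => ‖a (i.1 + i.2)‖ * r ^ (i.1 + i.2) := by
  obtain ⟨ρ, hrρ, hρR⟩ := exists_between hrR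
  have hρ : 0 ≤ ρ := hr.trans hrρ.le
  have hs := (ha ρ (by simpa [abs_of_nonneg hρ] using hρR)).summable.norm
  refine summable_norm_mul_pow_add hr hrρ (B := ∑' k, ‖a k * (ρ : ℂ) ^ k‖) fun k => ?_
  simpa [abs_of_nonneg hρ] using hs.le_tsum k fun _ _ => norm_nonneg _

/-- The coefficient of `z ^ k` in the Taylor series of `h` at `0`. -/
def taylorCoeff (h : ℂ → ℂ) (k : ℕ) : ℂ := (k.factorial : ℂ)⁻¹ * iteratedDeriv k h 0

theorem hasSum_taylorCoeff {h : ℂ → ℂ} {R : ℝ} (hh : DifferentiableOn ℂ h (ball 0 R)) :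
    ∀ z ∈ ball (0 : ℂ) R, HasSum (fun k => taylorCoeff h k * z ^ k) (h z) := fun z hz => by
  simpa [taylorCoeff, mul_assoc, mul_comm, mul_left_comm] using
    Complex.hasSum_taylorSeries_on_ball hh hz

theorem pow_lt_mul_of_lt_mul_rpow {x c C R : ℝ} {N : ℕ} (hN : N ≠ 0) (hx : 0 ≤ x) (hc : 0 ≤ c)
    (hR : 0 ≤ R) (hC : C ≤ c ^ (1 / (N : ℝ))) (hlt : x < C * R ^ (1 / (N : ℝ))) :
    x ^ N < c * R := by
  have hroot : x < (c * R) ^ (N : ℝ)⁻¹ := by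
    rw [← one_div, Real.mul_rpow hc hR]
    exact hlt.trans_le (by gcongr)
  calc x ^ N < ((c * R) ^ (N : ℝ)⁻¹) ^ N := by gcongr
    _ = c * R := Real.rpow_inv_natCast_pow (by positivity) hN

theorem Acoef_succ (α β : ℕ) :
    Acoef α (β + 1) = Acoef α β * (((β + 1) * (α + 2) - 1) * ((β + 1) * (α + 2))) :=
  Finset.prod_Icc_succ_top (by omega) _

theorem pow_mul_factorial_sq_le_Acoef (α β : ℕ) :
    ((α + 2) * (α + 1)) ^ β * β.factorial ^ 2 ≤ Acoef α β := by
  induction β with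
  | zero => simp [Acoef]
  | succ β ih =>
    have hfactor : (β + 1) * (α + 1) ≤ (β + 1) * (α + 2) - 1 := by
      rw [show (β + 1) * (α + 2) = (β + 1) * (α + 1) + (β + 1) by ring]
      omega
    calc ((α + 2) * (α + 1)) ^ (β + 1) * (β + 1).factorial ^ 2
        = ((α + 2) * (α + 1)) ^ β * β.factorial ^ 2 *
            (((β + 1) * (α + 1)) * ((β + 1) * (α + 2))) := by
          rw [Nat.factorial_succ]
          ring
      _ ≤ Acoef α (β + 1) := by
          rw [Acoef_succ]
          gcongr

theorem Acoef_le_pow_mul_factorial_sq (α β : ℕ) :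
    Acoef α β ≤ ((α + 2) ^ 2) ^ β * β.factorial ^ 2 := by
  induction β with
  | zero => simp [Acoef]
  | succ β ih =>
    calc Acoef α (β + 1)
        ≤ ((α + 2) ^ 2) ^ β * β.factorial ^ 2 * (((β + 1) * (α + 2)) * ((β + 1) * (α + 2))) := by
          rw [Acoef_succ]
          gcongr
          exact Nat.sub_le _ _
      _ = ((α + 2) ^ 2) ^ (β + 1) * (β + 1).factorial ^ 2 := by
          rw [Nat.factorial_succ]
          ring

theorem Acoef_pos (α β : ℕ) : 0 < Acoef α β :=
  lt_of_lt_of_le (by positivity) (pow_mul_factorial_sq_le_Acoef α β)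

theorem factorial_add_sq_le (j k : ℕ) :
    (j + k).factorial ^ 2 ≤ 4 ^ (j + k) * (j.factorial ^ 2 * k.factorial ^ 2) :=
  calc (j + k).factorial ^ 2
      = ((j + k).choose k * j.factorial * k.factorial) ^ 2 := by
        rw [Nat.add_choose_mul_factorial_mul_factorial]
    _ ≤ (2 ^ (j + k) * j.factorial * k.factorial) ^ 2 := by
        gcongr
        exact Nat.choose_le_two_pow _ _
    _ = 4 ^ (j + k) * (j.factorial ^ 2 * k.factorial ^ 2) := by
        rw [show 4 = 2 ^ 2 by norm_num, pow_right_comm]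
        ring

/-- The bound imposed on `|X|^{m+2} / R`; its `(m+2)`-th root is the first term of the minimum
`Cbound m n`. -/
def xConst (m : ℕ) : ℝ := (m + 1) / (4 * (m + 2))

/-- The bound imposed on `|Y|^{n+2} / R`; its `(n+2)`-th root is the second term of the minimum
`Cbound m n`. -/
def yConst (m n : ℕ) : ℝ := ((n + 2) * (n + 1)) / (4 * (m + 2) ^ 2)

theorem xConst_pos (m : ℕ) : 0 < xConst m := by unfold xConst; positivity

theorem xConst_le_one (m : ℕ) : xConst m ≤ 1 := by
  rw [xConst, div_le_one (by positivity)]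
  linarith [(m.cast_nonneg : (0 : ℝ) ≤ m)]

theorem yConst_pos (m n : ℕ) : 0 < yConst m n := by unfold yConst; positivity

theorem Acoef_add_mul_pow_le (m n j k : ℕ) :
    Acoef m (j + k) * (yConst m n ^ j * xConst m ^ k) ≤ (Acoef n j * Acoef m k : ℝ) := by
  have hx := xConst_pos m
  have hy := yConst_pos m n
  have hupper : (Acoef m (j + k) : ℝ) ≤
      ((m + 2) ^ 2) ^ (j + k) * (4 ^ (j + k) * (j.factorial ^ 2 * k.factorial ^ 2)) := by
    exact_mod_cast (Acoef_le_pow_mul_factorial_sq m (j + k)).trans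
      (by gcongr; exact factorial_add_sq_le j k)
  have hyConst : (4 * (m + 2) ^ 2 : ℝ) * yConst m n = (n + 2) * (n + 1) := by
    unfold yConst
    field_simp
  have hxConst : (4 * (m + 2) ^ 2 : ℝ) * xConst m = (m + 2) * (m + 1) := by
    unfold xConst
    field_simp
  calc Acoef m (j + k) * (yConst m n ^ j * xConst m ^ k)
      ≤ ((m + 2) ^ 2) ^ (j + k) * (4 ^ (j + k) * (j.factorial ^ 2 * k.factorial ^ 2)) *
          (yConst m n ^ j * xConst m ^ k) := by gcongr
    _ = ((4 * (m + 2) ^ 2) * yConst m n) ^ j * j.factorial ^ 2 *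
          (((4 * (m + 2) ^ 2) * xConst m) ^ k * k.factorial ^ 2) := by
        simp only [mul_pow, pow_add]
        ring
    _ = ((n + 2) * (n + 1)) ^ j * j.factorial ^ 2 *
          (((m + 2) * (m + 1)) ^ k * k.factorial ^ 2) := by rw [hyConst, hxConst]
    _ ≤ Acoef n j * Acoef m k := by
        gcongr
        · exact_mod_cast pow_mul_factorial_sq_le_Acoef n j
        · exact_mod_cast pow_mul_factorial_sq_le_Acoef m k

section Dop

variable {m : ℕ} {a : ℕ → ℂ} {f : ℂ → ℂ} {x : ℂ}

theorem hasSum_Dop (hx : x ≠ 0)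
    (hf : ∀ᶠ z in 𝓝 x, HasSum (fun k => a k * z ^ (k * (m + 2))) (f z)) :
    HasSum (fun k => a (k + 1) * (Acoef m (k + 1) / Acoef m k) * x ^ (k * (m + 2)))
      (Dop m f x) := by
  have hderiv : ∀ᶠ z in 𝓝 x, HasSum
      (fun k => a k * (k * (m + 2) : ℕ) * z ^ (k * (m + 2) - 1)) (deriv f z) :=
    hf.eventually_nhds.mono fun z hz => hasSum_deriv_of_eventually_hasSum_mul_pow hz
  have hderiv2 := (hasSum_deriv_of_eventually_hasSum_mul_pow hderiv).div_const (x ^ m)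
  rw [← hasSum_nat_add_iff' 1] at hderiv2
  have hconst : ∑ k ∈ Finset.range 1,
      a k * (k * (m + 2) : ℕ) * (k * (m + 2) - 1 : ℕ) * x ^ (k * (m + 2) - 1 - 1) / x ^ m = 0 := by
    simp
  rw [hconst, sub_zero] at hderiv2
  refine hderiv2.congr_fun fun k => ?_
  have hexp : (k + 1) * (m + 2) - 1 - 1 = k * (m + 2) + m := by
    rw [add_one_mul]
    omega
  have hA : (Acoef m k : ℂ) ≠ 0 := Nat.cast_ne_zero.mpr (Acoef_pos m k).ne'
  rw [Acoef_succ, Nat.cast_mul, mul_div_cancel_left₀ _ hA, hexp, pow_add, Nat.cast_mul]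
  field_simp

theorem eventually_hasSum_iterate_Dop (hx : x ≠ 0)
    (hf : ∀ᶠ z in 𝓝 x, HasSum (fun k => a k * z ^ (k * (m + 2))) (f z)) (j : ℕ) :
    ∀ᶠ z in 𝓝 x, HasSum
      (fun k => a (j + k) * (Acoef m (j + k) / Acoef m k) * z ^ (k * (m + 2)))
      ((Dop m)^[j] f z) := by
  induction j with
  | zero =>
    have hA : ∀ k, (Acoef m k : ℂ) ≠ 0 := fun k => Nat.cast_ne_zero.mpr (Acoef_pos m k).ne'
    simpa [hA] using hf
  | succ j ih =>
    filter_upwards [ih.eventually_nhds, eventually_ne_nhds hx] with z hz hz0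
    rw [Function.iterate_succ_apply']
    refine (hasSum_Dop hz0 hz).congr_fun fun k => ?_
    have hA : (Acoef m (k + 1) : ℂ) ≠ 0 := Nat.cast_ne_zero.mpr (Acoef_pos m (k + 1)).ne'
    rw [mul_assoc (a (j + (k + 1))), div_mul_div_cancel₀ hA, add_right_comm j 1 k, ← add_assoc]

end Dop

section SeriesM

variable {m n : ℕ} {a : ℕ → ℂ} {h : ℂ → ℂ} {r R : ℝ} {p : ℂ × ℂ}

/-- The `(j, k)` term of the double power series of `M` at `p = (X, Y)`, where `a` is the sequence
of Taylor coefficients of `h` at `0`. -/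
def seriesMTerm (m n : ℕ) (a : ℕ → ℂ) (i : ℕ × ℕ) (p : ℂ × ℂ) : ℂ :=
  a (i.1 + i.2) * (Acoef m (i.1 + i.2) / (Acoef n i.1 * Acoef m i.2)) *
    (p.2 ^ (i.1 * (n + 2)) * p.1 ^ (i.2 * (m + 2)))

/-- The function `M` as the sum of its double power series, which, unlike the series of iterates of
`Dop`, also makes sense at `X = 0`. -/
def seriesM (m n : ℕ) (a : ℕ → ℂ) (p : ℂ × ℂ) : ℂ := ∑' i, seriesMTerm m n a i p

/-- The polydisc on which `M` converges when `h` is holomorphic on the disc of radius `R`; it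
contains the polydisc of the theorem. -/
def convergencePolydisc (m n : ℕ) (R : ℝ) : Set (ℂ × ℂ) :=
  {p | ‖p.1‖ ^ (m + 2) < xConst m * R ∧ ‖p.2‖ ^ (n + 2) < yConst m n * R}

theorem isOpen_convergencePolydisc (m n : ℕ) (R : ℝ) : IsOpen (convergencePolydisc m n R) :=
  (isOpen_lt (continuous_fst.norm.pow _) continuous_const).inter
    (isOpen_lt (continuous_snd.norm.pow _) continuous_const)

theorem mem_convergencePolydisc_iff_lt :
    p ∈ convergencePolydisc m n R ↔
      max (‖p.1‖ ^ (m + 2) / xConst m) (‖p.2‖ ^ (n + 2) / yConst m n) < R := by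
  rw [max_lt_iff, div_lt_iff₀' (xConst_pos m), div_lt_iff₀' (yConst_pos m n)]
  rfl

theorem exists_lt_mem_convergencePolydisc (hp : p ∈ convergencePolydisc m n R) :
    ∃ r < R, p ∈ convergencePolydisc m n r := by
  simp only [mem_convergencePolydisc_iff_lt] at hp ⊢
  obtain ⟨r, hpr, hrR⟩ := exists_between hp
  exact ⟨r, hrR, hpr⟩

theorem exists_mem_convergencePolydisc (m n : ℕ) (p : ℂ × ℂ) :
    ∃ R, p ∈ convergencePolydisc m n R := by
  simp only [mem_convergencePolydisc_iff_lt]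
  exact exists_gt _

theorem pos_of_mem_convergencePolydisc (hp : p ∈ convergencePolydisc m n R) : 0 < R :=
  pos_of_mul_pos_right ((by positivity : 0 ≤ ‖p.1‖ ^ (m + 2)).trans_lt hp.1) (xConst_pos m).le

theorem norm_seriesMTerm_le (hp : p ∈ convergencePolydisc m n r) (i : ℕ × ℕ) :
    ‖seriesMTerm m n a i p‖ ≤ ‖a (i.1 + i.2)‖ * r ^ (i.1 + i.2) := by
  obtain ⟨j, k⟩ := i
  have hr := pos_of_mem_convergencePolydisc hp
  have hA : (0 : ℝ) < Acoef n j * Acoef m k := by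
    exact_mod_cast mul_pos (Acoef_pos n j) (Acoef_pos m k)
  calc ‖seriesMTerm m n a (j, k) p‖
      = ‖a (j + k)‖ * (Acoef m (j + k) / (Acoef n j * Acoef m k) *
          ((‖p.2‖ ^ (n + 2)) ^ j * (‖p.1‖ ^ (m + 2)) ^ k)) := by
        simp only [seriesMTerm, norm_mul, norm_div, norm_pow, Complex.norm_natCast, ← pow_mul']
        ring
    _ ≤ ‖a (j + k)‖ * (Acoef m (j + k) / (Acoef n j * Acoef m k) *
          ((yConst m n * r) ^ j * (xConst m * r) ^ k)) := by
        gcongr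
        · exact pow_nonneg (mul_nonneg (yConst_pos m n).le hr.le) j
        · exact hp.2.le
        · exact hp.1.le
    _ = ‖a (j + k)‖ * (Acoef m (j + k) * (yConst m n ^ j * xConst m ^ k) /
          (Acoef n j * Acoef m k) * r ^ (j + k)) := by ring
    _ ≤ ‖a (j + k)‖ * (1 * r ^ (j + k)) := by
        gcongr
        exact (div_le_one hA).mpr (Acoef_add_mul_pow_le m n j k)
    _ = ‖a (j + k)‖ * r ^ (j + k) := by rw [one_mul]

theorem differentiableAt_seriesM
    (ha : ∀ z ∈ ball (0 : ℂ) R, HasSum (fun k => a k * z ^ k) (h z))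
    (hp : p ∈ convergencePolydisc m n R) : DifferentiableAt ℂ (seriesM m n a) p := by
  obtain ⟨r, hrR, hpr⟩ := exists_lt_mem_convergencePolydisc hp
  have hr := (pos_of_mem_convergencePolydisc hpr).le
  refine differentiableAt_tsum_of_norm_le (summable_norm_mul_pow_add_of_hasSum hr hrR ha)
    ((isOpen_convergencePolydisc m n r).mem_nhds hpr) (fun i => ?_)
    fun i q hq => norm_seriesMTerm_le hq i
  unfold seriesMTerm
  fun_prop

theorem hasSum_seriesMTerm
    (ha : ∀ z ∈ ball (0 : ℂ) R, HasSum (fun k => a k * z ^ k) (h z))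
    (hp : p ∈ convergencePolydisc m n R) :
    HasSum (fun i => seriesMTerm m n a i p) (seriesM m n a p) := by
  obtain ⟨r, hrR, hpr⟩ := exists_lt_mem_convergencePolydisc hp
  have hr := (pos_of_mem_convergencePolydisc hpr).le
  exact ((summable_norm_mul_pow_add_of_hasSum hr hrR ha).of_norm_bounded
    (norm_seriesMTerm_le hpr)).hasSum

theorem norm_fst_pow_lt_of_mem_convergencePolydisc (hp : p ∈ convergencePolydisc m n R) :
    ‖p.1‖ ^ (m + 2) < R :=
  hp.1.trans_le (mul_le_of_le_one_left (pos_of_mem_convergencePolydisc hp).le (xConst_le_one m))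

theorem hasSum_iterate_Dop_comp_pow
    (ha : ∀ z ∈ ball (0 : ℂ) R, HasSum (fun k => a k * z ^ k) (h z))
    {x : ℂ} (hx : ‖x‖ ^ (m + 2) < R) (hx0 : x ≠ 0) (j : ℕ) :
    HasSum (fun k => a (j + k) * (Acoef m (j + k) / Acoef m k) * x ^ (k * (m + 2)))
      ((Dop m)^[j] (fun X => h (X ^ (m + 2))) x) := by
  have hball : ∀ᶠ z in 𝓝 x, ‖z‖ ^ (m + 2) < R :=
    (continuous_norm.pow (m + 2)).continuousAt.eventually_lt_const hx
  refine (eventually_hasSum_iterate_Dop hx0 (hball.mono fun z hz => ?_) j).self_of_nhds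
  simpa only [pow_mul'] using ha (z ^ (m + 2)) (by simpa using hz)

theorem hasSum_iterate_Dop_seriesM
    (ha : ∀ z ∈ ball (0 : ℂ) R, HasSum (fun k => a k * z ^ k) (h z))
    (hp : p ∈ convergencePolydisc m n R) (hp0 : p.1 ≠ 0) :
    HasSum (fun j : ℕ => (1 / (Acoef n j : ℂ)) *
      ((Dop m)^[j] (fun X => h (X ^ (m + 2))) p.1) * p.2 ^ (j * (n + 2))) (seriesM m n a p) := by
  refine (hasSum_seriesMTerm ha hp).prod_fiberwise fun j => ?_
  have hD := hasSum_iterate_Dop_comp_pow ha (norm_fst_pow_lt_of_mem_convergencePolydisc hp) hp0 j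
  refine ((hD.mul_left (1 / (Acoef n j : ℂ))).mul_right (p.2 ^ (j * (n + 2)))).congr_fun
    fun k => ?_
  simp only [seriesMTerm]
  ring

theorem mem_convergencePolydisc_of_lt_Cbound (hR : 0 ≤ R)
    (hX : ‖p.1‖ < Cbound m n * R ^ ((1 : ℝ) / (m + 2)))
    (hY : ‖p.2‖ < Cbound m n * R ^ ((1 : ℝ) / (n + 2))) : p ∈ convergencePolydisc m n R := by
  constructor
  · refine pow_lt_mul_of_lt_mul_rpow (by omega) (norm_nonneg _) (xConst_pos m).le hR
      (C := Cbound m n) ?_ ?_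
    · push_cast
      exact min_le_left _ _
    · exact_mod_cast hX
  · refine pow_lt_mul_of_lt_mul_rpow (by omega) (norm_nonneg _) (yConst_pos m n).le hR
      (C := Cbound m n) ?_ ?_
    · push_cast
      exact min_le_right _ _
    · exact_mod_cast hY

end SeriesM

/-- Lemma "convergence1".
For `h` holomorphic on `D(0,R)`, the series `M(X,Y) = Σ_j (1/A_j^n) D^j[h(X^{m+2})] Y^{j(n+2)}`
converges and defines a holomorphic function on `|X| < C·R^{1/(m+2)}`, `|Y| < C·R^{1/(n+2)}`;
in particular, if `h` is entire then `M` is entire on `ℂ²`. -/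
theorem series_M_holomorphic
    (m n : ℕ) (hm : 0 < m) (hn : 0 < n) (R : ℝ) (hR : 0 < R)
    (h : ℂ → ℂ) (hh : DifferentiableOn ℂ h (Metric.ball 0 R)) :
    (∃ M : ℂ × ℂ → ℂ,
      DifferentiableOn ℂ M
        {p : ℂ × ℂ | ‖p.1‖ < Cbound m n * R ^ ((1 : ℝ) / (m + 2))
          ∧ ‖p.2‖ < Cbound m n * R ^ ((1 : ℝ) / (n + 2))} ∧
      ∀ p : ℂ × ℂ, ‖p.1‖ < Cbound m n * R ^ ((1 : ℝ) / (m + 2)) →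
        ‖p.2‖ < Cbound m n * R ^ ((1 : ℝ) / (n + 2)) → p.1 ≠ 0 →
        HasSum (fun j : ℕ =>
            (1 / (Acoef n j : ℂ)) * ((Dop m)^[j] (fun X => h (X ^ (m + 2))) p.1)
              * p.2 ^ (j * (n + 2)))
          (M p)) ∧
    (Differentiable ℂ h →
      ∃ M : ℂ × ℂ → ℂ, Differentiable ℂ M ∧
        ∀ p : ℂ × ℂ, p.1 ≠ 0 →
          HasSum (fun j : ℕ =>
              (1 / (Acoef n j : ℂ)) * ((Dop m)^[j] (fun X => h (X ^ (m + 2))) p.1)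
                * p.2 ^ (j * (n + 2)))
            (M p)) := by
  have hball := hasSum_taylorCoeff hh
  refine ⟨⟨seriesM m n (taylorCoeff h), fun p hp => ?_, fun p hX hY hp0 => ?_⟩,
    fun hd => ⟨seriesM m n (taylorCoeff h), fun p => ?_, fun p hp0 => ?_⟩⟩
  · have hp := mem_convergencePolydisc_of_lt_Cbound hR.le hp.1 hp.2
    exact (differentiableAt_seriesM hball hp).differentiableWithinAt
  · have hp := mem_convergencePolydisc_of_lt_Cbound hR.le hX hY
    exact hasSum_iterate_Dop_seriesM hball hp hp0
  · obtain ⟨S, hp⟩ := exists_mem_convergencePolydisc m n p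
    exact differentiableAt_seriesM (hasSum_taylorCoeff hd.differentiableOn) hp
  · obtain ⟨S, hp⟩ := exists_mem_convergencePolydisc m n p
    exact hasSum_iterate_Dop_seriesM (hasSum_taylorCoeff hd.differentiableOn) hp hp0
end
end

section
/- Let m, n be positive integers, ε = 1 or −1, and let w be a real-analytic solution of x^m w_yy + ε y^n w_xx = 0 on a square |x| < R, |y| < R, with expansion w(x,y) = Σ_{j=0}^∞ α_j(x) y^j. Then α_k ≡ 0 on (−R, R) for every index k ≥ 2 such that neither k nor k−1 is a nonnegative integer multiple of n+2. -/
noncomputable section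

/-- Dot product of two 3-vectors (ℂ-bilinear extension when over ℂ). -/
def dot3 {R : Type*} [CommRing R] (v w : Fin 3 → R) : R :=
  v 0 * w 0 + v 1 * w 1 + v 2 * w 2

/-- Cross product of two 3-vectors (ℂ-bilinear extension when over ℂ). -/
def cross3 {R : Type*} [CommRing R] (v w : Fin 3 → R) : Fin 3 → R :=
  ![v 1 * w 2 - v 2 * w 1, v 2 * w 0 - v 0 * w 2, v 0 * w 1 - v 1 * w 0]

/-- Euclidean norm of a real 3-vector. -/
def enorm3 (v : Fin 3 → ℝ) : ℝ := Real.sqrt (dot3 v v)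

/-- Partial derivative with respect to the first variable `s`. -/
def pds {E : Type*} [NormedAddCommGroup E] [NormedSpace ℝ E]
    (f : ℝ × ℝ → E) (p : ℝ × ℝ) : E :=
  deriv (fun s => f (s, p.2)) p.1

/-- Partial derivative with respect to the second variable `t`. -/
def pdt {E : Type*} [NormedAddCommGroup E] [NormedSpace ℝ E]
    (f : ℝ × ℝ → E) (p : ℝ × ℝ) : E :=
  deriv (fun t => f (p.1, t)) p.2

/-- Componentwise `s`-derivative of a 3-vector valued map. -/
def vds (V : ℝ × ℝ → Fin 3 → ℝ) (p : ℝ × ℝ) : Fin 3 → ℝ := fun i => pds (fun q => V q i) p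

/-- Componentwise `t`-derivative of a 3-vector valued map. -/
def vdt (V : ℝ × ℝ → Fin 3 → ℝ) (p : ℝ × ℝ) : Fin 3 → ℝ := fun i => pdt (fun q => V q i) p

/-!
Write `w = ∑ αⱼ(x) yʲ`. Comparing the coefficients of `yᵏ` in `a(x) w_yy + b(x) yⁿ w_xx = 0`
gives `a (k + 2)(k + 1) α_{k+2} + b α_{k-n}'' = 0`, where the second term is absent if `k < n`.
Hence, where `a ≠ 0`, the coefficients `α₂, …, α_{n+1}` vanish, and `α_{j+n+2}` vanishes as soon as
`αⱼ` does identically. The zeros of `a` are reached by continuity.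
-/

open Filter Topology
open scoped ContDiff

lemma two_le_mod_of_not_dvd {d k : ℕ} (hk : ¬ d ∣ k) (hk' : ¬ d ∣ k - 1) : 2 ≤ k % d := by
  by_contra! hlt
  interval_cases hmod : k % d
  · exact hk (Nat.dvd_of_mod_eq_zero hmod)
  · exact hk' (hmod ▸ Nat.dvd_sub_mod k)

section OneVariable

variable {𝕜 F : Type*} [NontriviallyNormedField 𝕜] [NormedAddCommGroup F] [NormedSpace 𝕜 F]

lemma dense_setOf_pow_ne_zero (m : ℕ) : Dense {x : 𝕜 | x ^ m ≠ 0} :=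
  (dense_compl_singleton 0).mono fun _ hx => pow_ne_zero m hx

-- For `k < n` the truncated index `k - n` is harmless, since then `k.descFactorial n = 0`.
lemma iteratedDeriv_pow_smul_zero {h : 𝕜 → F} {k : ℕ} (hh : ContDiffAt 𝕜 k h 0) (n : ℕ) :
    iteratedDeriv k (fun y => y ^ n • h y) 0 =
      (k.descFactorial n : 𝕜) • iteratedDeriv (k - n) h 0 := by
  have leibniz : iteratedDeriv k (fun y => y ^ n • h y) 0 =
      ∑ i ∈ Finset.range (k + 1),
        k.choose i • iteratedDeriv i (· ^ n) (0 : 𝕜) • iteratedDeriv (k - i) h 0 := by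
    simp only [← iteratedDerivWithin_univ]
    exact iteratedDerivWithin_smul (Set.mem_univ 0) uniqueDiffOn_univ
      (contDiff_id.pow n).contDiffWithinAt hh.contDiffWithinAt
  simp only [leibniz, iteratedDeriv_fun_pow_zero, Nat.cast_ite, Nat.cast_zero, ite_smul,
    zero_smul, smul_ite, smul_zero, Finset.sum_ite_eq', Finset.mem_range]
  split_ifs with hn
  · rw [Nat.descFactorial_eq_factorial_mul_choose, mul_comm, Nat.cast_smul_eq_nsmul,
      Nat.cast_smul_eq_nsmul, mul_smul]
  · rw [Nat.descFactorial_of_lt (by lia), Nat.cast_zero, zero_smul]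

lemma iteratedDeriv_zero_of_hasSum_pow_smul [CompleteSpace F] {g : 𝕜 → F} {c : ℕ → F}
    (hg : ∀ᶠ y in 𝓝 0, HasSum (fun j => y ^ j • c j) (g y)) (j : ℕ) :
    iteratedDeriv j g 0 = (j.factorial : 𝕜) • c j := by
  let p : FormalMultilinearSeries 𝕜 𝕜 F := fun j =>
    ContinuousMultilinearMap.mkPiRing 𝕜 (Fin j) (c j)
  obtain ⟨r, hp⟩ : HasFPowerSeriesAt g p 0 := by
    rw [hasFPowerSeriesAt_iff]
    simpa [p, FormalMultilinearSeries.coeff] using hg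
  simpa [p, iteratedDeriv_eq_iteratedFDeriv, Nat.cast_smul_eq_nsmul] using
    (hp.factorial_smul 1 j).symm

end OneVariable

section PartialDerivatives

variable {E : Type*} [NormedAddCommGroup E] [NormedSpace ℝ E] {f g : ℝ × ℝ → E} {p : ℝ × ℝ}
  {Ω : Set (ℝ × ℝ)}

lemma pds_eq_fderiv (hf : DifferentiableAt ℝ f p) : pds f p = fderiv ℝ f p (1, 0) :=
  (hf.hasFDerivAt.comp_hasDerivAt p.1
    ((hasDerivAt_id p.1).prodMk (hasDerivAt_const p.1 p.2))).deriv

lemma pdt_eq_fderiv (hf : DifferentiableAt ℝ f p) : pdt f p = fderiv ℝ f p (0, 1) :=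
  (hf.hasFDerivAt.comp_hasDerivAt p.2
    ((hasDerivAt_const p.2 p.1).prodMk (hasDerivAt_id p.2))).deriv

lemma pds_eqOn (hΩ : IsOpen Ω) (h : Set.EqOn f g Ω) : Set.EqOn (pds f) (pds g) Ω := fun p hp =>
  have slice : ContinuousAt (fun s : ℝ => (s, p.2)) p.1 := by fun_prop
  EventuallyEq.deriv_eq <|
    slice.eventually (h.eventuallyEq_of_mem (hΩ.mem_nhds hp))

lemma pdt_eqOn (hΩ : IsOpen Ω) (h : Set.EqOn f g Ω) : Set.EqOn (pdt f) (pdt g) Ω := fun p hp =>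
  have slice : ContinuousAt (fun t : ℝ => (p.1, t)) p.2 := by fun_prop
  EventuallyEq.deriv_eq <|
    slice.eventually (h.eventuallyEq_of_mem (hΩ.mem_nhds hp))

lemma pds_pds_eq_zero (hΩ : IsOpen Ω) (y : ℝ)
    (hf : ∀ x, (x, y) ∈ Ω → f (x, y) = 0) {x : ℝ} (hx : (x, y) ∈ Ω) :
    pds (pds f) (x, y) = 0 := by
  have open_section : IsOpen {s | (s, y) ∈ Ω} := hΩ.preimage (by fun_prop)
  have vanishes : Set.EqOn (fun s => f (s, y)) 0 {s | (s, y) ∈ Ω} := hf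
  simpa [pds] using (vanishes.deriv open_section).deriv open_section hx

lemma contDiffOn_pds {l r : ℕ∞ω} (hf : ContDiffOn ℝ r f Ω) (hΩ : IsOpen Ω) (hlr : l + 1 ≤ r) :
    ContDiffOn ℝ l (pds f) Ω :=
  ((hf.fderiv_of_isOpen hΩ hlr).clm_apply contDiffOn_const).congr fun _ hp =>
    pds_eq_fderiv ((hf.contDiffAt (hΩ.mem_nhds hp)).differentiableAt (by rintro rfl; simp at hlr))

lemma contDiffOn_pdt {l r : ℕ∞ω} (hf : ContDiffOn ℝ r f Ω) (hΩ : IsOpen Ω) (hlr : l + 1 ≤ r) :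
    ContDiffOn ℝ l (pdt f) Ω :=
  ((hf.fderiv_of_isOpen hΩ hlr).clm_apply contDiffOn_const).congr fun _ hp =>
    pdt_eq_fderiv ((hf.contDiffAt (hΩ.mem_nhds hp)).differentiableAt (by rintro rfl; simp at hlr))

lemma contDiffOn_iterate_pdt (hf : ContDiffOn ℝ ∞ f Ω) (hΩ : IsOpen Ω) (j : ℕ) :
    ContDiffOn ℝ ∞ (pdt^[j] f) Ω :=
  Function.Iterate.rec (fun g => ContDiffOn ℝ ∞ g Ω) hf
    (fun _ hg => contDiffOn_pdt hg hΩ le_rfl) j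

lemma pdt_pds_eqOn (hf : ContDiffOn ℝ 2 f Ω) (hΩ : IsOpen Ω) :
    Set.EqOn (pdt (pds f)) (pds (pdt f)) Ω := by
  intro p hp
  have differentiable : ∀ q ∈ Ω, DifferentiableAt ℝ f q := fun q hq =>
    (hf.contDiffAt (hΩ.mem_nhds hq)).differentiableAt two_ne_zero
  have differentiable_fderiv : DifferentiableAt ℝ (fderiv ℝ f) p :=
    ((hf.fderiv_of_isOpen hΩ one_add_one_eq_two.le).contDiffAt
      (hΩ.mem_nhds hp)).differentiableAt one_ne_zero
  have differentiable_apply (v : ℝ × ℝ) : DifferentiableAt ℝ (fun q => fderiv ℝ f q v) p :=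
    differentiable_fderiv.clm_apply (differentiableAt_const v)
  have fderiv_apply (v u : ℝ × ℝ) :
      fderiv ℝ (fun q => fderiv ℝ f q v) p u = fderiv ℝ (fderiv ℝ f) p u v := by
    simp [fderiv_clm_apply differentiable_fderiv (differentiableAt_const v)]
  have symmetric : IsSymmSndFDerivAt ℝ f p :=
    (hf.contDiffAt (hΩ.mem_nhds hp)).isSymmSndFDerivAt (by simp)
  calc pdt (pds f) p
      = pdt (fun q => fderiv ℝ f q (1, 0)) p :=
        pdt_eqOn hΩ (fun q hq => pds_eq_fderiv (differentiable q hq)) hp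
    _ = fderiv ℝ (fderiv ℝ f) p (0, 1) (1, 0) := by
        rw [pdt_eq_fderiv (differentiable_apply _), fderiv_apply]
    _ = fderiv ℝ (fderiv ℝ f) p (1, 0) (0, 1) := symmetric.eq _ _
    _ = pds (fun q => fderiv ℝ f q (0, 1)) p := by
        rw [pds_eq_fderiv (differentiable_apply _), fderiv_apply]
    _ = pds (pdt f) p :=
        (pds_eqOn hΩ (fun q hq => pdt_eq_fderiv (differentiable q hq)) hp).symm

lemma iterate_pdt_pds_eqOn (hf : ContDiffOn ℝ ∞ f Ω) (hΩ : IsOpen Ω) (j : ℕ) :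
    Set.EqOn (pdt^[j] (pds f)) (pds (pdt^[j] f)) Ω := by
  induction j with
  | zero => exact Set.eqOn_refl _ _
  | succ j ih =>
    rw [Function.iterate_succ_apply', Function.iterate_succ_apply']
    exact (pdt_eqOn hΩ ih).trans
      (pdt_pds_eqOn (contDiffOn_infty.1 (contDiffOn_iterate_pdt hf hΩ j) 2) hΩ)

lemma iteratedDeriv_eq_iterate_pdt (f : ℝ × ℝ → E) (j : ℕ) (x y : ℝ) :
    iteratedDeriv j (fun t => f (x, t)) y = pdt^[j] f (x, y) := by
  induction j generalizing y with
  | zero => rfl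
  | succ j ih => rw [iteratedDeriv_succ, funext ih, Function.iterate_succ_apply']; rfl

end PartialDerivatives

section Equation

variable {E : Type*} [NormedAddCommGroup E] [NormedSpace ℝ E] {w : ℝ × ℝ → E}
  {Ω : Set (ℝ × ℝ)} {a b : ℝ → ℝ} {n : ℕ}

/-- The equation `a(x) w_yy + b(x) yⁿ w_xx = 0` on `Ω`, with `a(x) = xᵐ` and `b = ε` in the theorem.
The partial derivatives take junk values where they do not exist, so this is meant for smooth `w`.
-/
def SolvesOn (a b : ℝ → ℝ) (n : ℕ) (w : ℝ × ℝ → E) (Ω : Set (ℝ × ℝ)) : Prop :=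
  ∀ p ∈ Ω, a p.1 • pdt (pdt w) p + (b p.1 * p.2 ^ n) • pds (pds w) p = 0

lemma iterate_pdt_recurrence (hΩ : IsOpen Ω) (hw : ContDiffOn ℝ ∞ w Ω)
    (hsol : SolvesOn a b n w Ω) (k : ℕ) {x : ℝ} (hx : (x, 0) ∈ Ω) :
    a x • pdt^[k + 2] w (x, 0) +
      (b x * k.descFactorial n) • pds (pds (pdt^[k - n] w)) (x, 0) = 0 := by
  have slice : Continuous fun y : ℝ => (x, y) := by fun_prop
  have smooth_slice {f : ℝ × ℝ → E} (hf : ContDiffOn ℝ ∞ f Ω) :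
      ContDiffAt ℝ k (fun y => f (x, y)) 0 :=
    ((contDiffOn_infty.1 hf k).contDiffAt (hΩ.mem_nhds hx)).comp (0 : ℝ)
      (f := fun y : ℝ => (x, y)) (by fun_prop)
  have smooth_pds : ContDiffOn ℝ ∞ (pds w) Ω := contDiffOn_pds hw hΩ le_rfl
  have smooth_wxx := smooth_slice (contDiffOn_pds smooth_pds hΩ le_rfl)
  have smooth_wyy := smooth_slice (contDiffOn_iterate_pdt hw hΩ 2)
  have equation : (fun y => a x • pdt (pdt w) (x, y) + b x • y ^ n • pds (pds w) (x, y))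
      =ᶠ[𝓝 0] fun _ => 0 := by
    filter_upwards [slice.continuousAt.eventually (hΩ.mem_nhds hx)] with y hy
    simpa only [mul_smul] using hsol (x, y) hy
  have commute : pdt^[k - n] (pds (pds w)) (x, 0) = pds (pds (pdt^[k - n] w)) (x, 0) :=
    ((iterate_pdt_pds_eqOn smooth_pds hΩ _).trans
      (pds_eqOn hΩ (iterate_pdt_pds_eqOn hw hΩ _))) hx
  have differentiated := equation.iteratedDeriv_eq k
  rw [iteratedDeriv_fun_add (f := fun y => a x • pdt (pdt w) (x, y))
      (g := fun y => b x • y ^ n • pds (pds w) (x, y)) (contDiffAt_const.smul smooth_wyy)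
      (contDiffAt_const.smul ((contDiffAt_id.pow n).smul smooth_wxx)),
    iteratedDeriv_fun_const_smul_field, iteratedDeriv_fun_const_smul_field,
    iteratedDeriv_pow_smul_zero smooth_wxx, iteratedDeriv_eq_iterate_pdt (pds (pds w)), commute,
    iteratedDeriv_eq_iterate_pdt (pdt (pdt w))] at differentiated
  simpa [mul_smul] using differentiated

lemma iterate_pdt_eq_zero (hΩ : IsOpen Ω) (ha : Dense {x | a x ≠ 0}) (hw : ContDiffOn ℝ ∞ w Ω)
    (hsol : SolvesOn a b n w Ω) {k : ℕ} (hk : 2 ≤ k % (n + 2)) :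
    ∀ x, (x, 0) ∈ Ω → pdt^[k] w (x, 0) = 0 := by
  induction k using Nat.strong_induction_on with
  | _ k ih =>
    obtain ⟨k, rfl⟩ := Nat.exists_eq_add_of_le' (hk.trans (Nat.mod_le _ _))
    have wxx_term (x : ℝ) (hx : (x, 0) ∈ Ω) :
        (b x * k.descFactorial n) • pds (pds (pdt^[k - n] w)) (x, 0) = 0 := by
      rcases lt_or_ge k n with hkn | hnk
      · simp [Nat.descFactorial_of_lt hkn]
      · have mod_eq : (k - n) % (n + 2) = (k + 2) % (n + 2) := by
          rw [← Nat.add_mod_right (k - n) (n + 2)]; congr 1; lia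
        rw [pds_pds_eq_zero hΩ 0 (ih (k - n) (by lia) (mod_eq ▸ hk)) hx, smul_zero]
    let U : Set ℝ := {x | (x, 0) ∈ Ω}
    have open_U : IsOpen U := hΩ.preimage (by fun_prop)
    have continuous_U : ContinuousOn (fun x => pdt^[k + 2] w (x, 0)) U :=
      (contDiffOn_iterate_pdt hw hΩ (k + 2)).continuousOn.comp (by fun_prop) fun _ hx => hx
    have off_zeros : Set.EqOn (fun x => pdt^[k + 2] w (x, 0)) 0 (U ∩ {x | a x ≠ 0}) := by
      rintro x ⟨hx, hax⟩
      have recurrence := iterate_pdt_recurrence hΩ hw hsol k hx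
      rw [wxx_term x hx, add_zero] at recurrence
      exact (smul_eq_zero.1 recurrence).resolve_left hax
    exact off_zeros.of_subset_closure continuous_U continuousOn_const Set.inter_subset_left
      (ha.open_subset_closure_inter open_U)

theorem coefficient_vanishing_general [CompleteSpace E] (hΩ : IsOpen Ω)
    (ha : Dense {x | a x ≠ 0}) (hw : ContDiffOn ℝ ∞ w Ω) (hsol : SolvesOn a b n w Ω)
    {α : ℕ → ℝ → E}
    (hexp : ∀ x, (x, 0) ∈ Ω → ∀ᶠ y in 𝓝 0, HasSum (fun j => y ^ j • α j x) (w (x, y)))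
    {k : ℕ} (hk : ¬ n + 2 ∣ k) (hk' : ¬ n + 2 ∣ k - 1) {x : ℝ} (hx : (x, 0) ∈ Ω) :
    α k x = 0 := by
  have coefficient : pdt^[k] w (x, 0) = (k.factorial : ℝ) • α k x := by
    rw [← iteratedDeriv_zero_of_hasSum_pow_smul (hexp x hx), iteratedDeriv_eq_iterate_pdt]
  rw [iterate_pdt_eq_zero hΩ ha hw hsol (two_le_mod_of_not_dvd hk hk') x hx] at coefficient
  exact (smul_eq_zero.1 coefficient.symm).resolve_left (by positivity)

end Equation

/-- For an analytic solution `w = Σ_j α_j(x) y^j` of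
`x^m w_yy + ε y^n w_xx = 0` on the square, `α_k ≡ 0` whenever `k ≥ 2` and neither `k` nor
`k − 1` is a nonnegative-integer multiple of `n+2`. -/
theorem coefficient_vanishing
    (m n : ℕ) (hm : 0 < m) (hn : 0 < n) (ε : ℝ) (hε : ε = 1 ∨ ε = -1)
    (R : ℝ) (hR : 0 < R)
    (w : ℝ × ℝ → ℝ)
    (hw : AnalyticOnNhd ℝ w (Set.Ioo (-R) R ×ˢ Set.Ioo (-R) R))
    (hsol : ∀ p : ℝ × ℝ, |p.1| < R → |p.2| < R →
      p.1 ^ m * pdt (pdt w) p + ε * p.2 ^ n * pds (pds w) p = 0)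
    (α : ℕ → ℝ → ℝ) (hα : ∀ j, AnalyticOnNhd ℝ (α j) (Set.Ioo (-R) R))
    (hexp : ∀ x y : ℝ, |x| < R → |y| < R → HasSum (fun j => α j x * y ^ j) (w (x, y)))
    :
    ∀ k : ℕ, 2 ≤ k → ¬ (∃ q : ℕ, k = q * (n + 2)) → ¬ (∃ q : ℕ, k - 1 = q * (n + 2)) →
      ∀ x : ℝ, |x| < R → α k x = 0 := by
  intro k _ hk hk' x hx
  have near_zero : ∀ᶠ y : ℝ in 𝓝 0, |y| < R :=
    continuous_abs.continuousAt.eventually_lt continuousAt_const (by simpa using hR)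
  refine coefficient_vanishing_general (a := (· ^ m)) (b := fun _ => ε) (n := n)
    (isOpen_Ioo.prod isOpen_Ioo) (dense_setOf_pow_ne_zero m) hw.contDiffOn_of_completeSpace ?_ ?_
    (mt exists_eq_mul_left_of_dvd hk) (mt exists_eq_mul_left_of_dvd hk')
    ⟨abs_lt.1 hx, abs_lt.1 near_zero.self_of_nhds⟩
  · exact fun p hp => hsol p (abs_lt.2 hp.1) (abs_lt.2 hp.2)
  · intro s hs
    filter_upwards [near_zero] with y hy
    simpa only [smul_eq_mul, mul_comm] using hexp s y (abs_lt.2 hs.1) hy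
end
end
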